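/- arXiv:math/0703928 — 2 statements merged into one kernel-verified Lean document; each statement's English description precedes it below -/
import Mathlib

section
/- Let λ ≥ 0, t > 0, and let n be a nonnegative integer with n + λ > 0. Then e^{−nt} = ∫_0^∞ e^{−n(n+2λ)s} φ_t(s) ds, where φ_t(s) = (t / (2√π)) · s^{−3/2} · exp( −( t/(2√s) − λ√s )^2 ) for s > 0. -/
open MeasureTheory Real Set

noncomputable section

/-- the subordination kernel `φ_t(s) = (t/(2√π)) s^{-3/2} exp(-(t/(2√s) - λ√s)²)` -/
def phiKer (lam t s : ℝ) : ℝ :=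
  t / (2 * Real.sqrt π) * s ^ (-(3/2) : ℝ) *
    Real.exp (-(t / (2 * Real.sqrt s) - lam * Real.sqrt s) ^ 2)

/-- Change of variables `u = b x - a / x` in the Gaussian integral. -/
theorem integrableOn_and_integral_add_div_sq_mul_exp {a b : ℝ} (ha : 0 < a) (hb : 0 < b) :
    IntegrableOn (fun x : ℝ => (b + a / x ^ 2) * exp (-(b * x - a / x) ^ 2)) (Ioi 0) ∧
      ∫ x in Ioi (0 : ℝ), (b + a / x ^ 2) * exp (-(b * x - a / x) ^ 2) = √π := by
  have hderiv : ∀ x ∈ Ioi (0 : ℝ),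
      HasDerivWithinAt (fun x : ℝ => b * x - a / x) (b + a / x ^ 2) (Ioi 0) x := by
    intro x hx
    have hx0 : x ≠ 0 := ne_of_gt hx
    have h := ((hasDerivAt_id x).const_mul b).sub ((hasDerivAt_inv hx0).const_mul a)
    refine (h.congr_deriv ?_).hasDerivWithinAt
    field_simp
    ring
  have hinj : InjOn (fun x : ℝ => b * x - a / x) (Ioi 0) := by
    refine StrictMonoOn.injOn fun x hx y _ hxy => ?_
    have hx' : 0 < x := hx
    have h₁ : b * x < b * y := by gcongr
    have h₂ : a / y < a / x := by gcongr
    change b * x - a / x < b * y - a / y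
    linarith
  have himage : (fun x : ℝ => b * x - a / x) '' Ioi 0 = univ := by
    refine eq_univ_of_forall fun u => ?_
    have hab : 0 < 4 * a * b := by positivity
    have hsq : √(u ^ 2 + 4 * a * b) ^ 2 = u ^ 2 + 4 * a * b := sq_sqrt (by positivity)
    have hpos : 0 < u + √(u ^ 2 + 4 * a * b) := by
      have h : |u| < √(u ^ 2 + 4 * a * b) := by
        rw [← sqrt_sq_eq_abs]
        exact sqrt_lt_sqrt (sq_nonneg u) (by linarith)
      linarith [neg_abs_le u]
    refine ⟨(u + √(u ^ 2 + 4 * a * b)) / (2 * b), div_pos hpos (by positivity), ?_⟩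
    have hne := hpos.ne'
    generalize √(u ^ 2 + 4 * a * b) = r at *
    field_simp
    linear_combination hsq
  have habs : ∀ x : ℝ, |b + a / x ^ 2| = b + a / x ^ 2 := fun x => abs_of_pos (by positivity)
  have hint := integrableOn_image_iff_integrableOn_abs_deriv_smul measurableSet_Ioi hderiv hinj
    (fun u => exp (-u ^ 2))
  have hval := integral_image_eq_integral_abs_deriv_smul measurableSet_Ioi hderiv hinj
    (fun u => exp (-u ^ 2))
  simp only [himage, habs, smul_eq_mul, Measure.restrict_univ, integrableOn_univ] at hint hval
  refine ⟨hint.1 ?_, hval.symm.trans ?_⟩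
  · simpa using integrable_exp_neg_mul_sq one_pos
  · simpa using integral_gaussian 1

/-- The involution `x ↦ a / (b x)` preserves `exp (-(b x - a / x) ^ 2)`. -/
theorem integral_div_sq_mul_exp_eq {a b : ℝ} (ha : 0 < a) (hb : 0 < b) :
    ∫ x in Ioi (0 : ℝ), a / x ^ 2 * exp (-(b * x - a / x) ^ 2) =
      ∫ x in Ioi (0 : ℝ), b * exp (-(b * x - a / x) ^ 2) := by
  have hderiv : ∀ x ∈ Ioi (0 : ℝ),
      HasDerivWithinAt (fun x : ℝ => a / b * x⁻¹) (a / b * -(x ^ 2)⁻¹) (Ioi 0) x :=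
    fun x hx => ((hasDerivAt_inv (ne_of_gt hx)).const_mul (a / b)).hasDerivWithinAt
  have hab : a / b ≠ 0 := by positivity
  have hinj : InjOn (fun x : ℝ => a / b * x⁻¹) (Ioi 0) :=
    ((mul_right_injective₀ hab).comp inv_injective).injOn
  have himage : (fun x : ℝ => a / b * x⁻¹) '' Ioi 0 = Ioi 0 := by
    ext y
    constructor
    · rintro ⟨x, hx, rfl⟩
      have hx' : 0 < x := hx
      exact mem_Ioi.2 (by positivity)
    · intro hy
      have hy' : 0 < y := hy
      exact ⟨a / b * y⁻¹, mem_Ioi.2 (by positivity), by field_simp⟩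
  have hval := integral_image_eq_integral_abs_deriv_smul measurableSet_Ioi hderiv hinj
    (fun x => b * exp (-(b * x - a / x) ^ 2))
  rw [himage] at hval
  rw [hval]
  refine setIntegral_congr_fun measurableSet_Ioi fun x hx => ?_
  have hx' : 0 < x := hx
  have habs : |a / b * -(x ^ 2)⁻¹| = a / b * (x ^ 2)⁻¹ := by
    rw [mul_neg, abs_neg, abs_of_pos (by positivity)]
  have hexp : b * (a / b * x⁻¹) - a / (a / b * x⁻¹) = -(b * x - a / x) := by
    field_simp
    ring
  simp only [habs, hexp, smul_eq_mul, neg_sq]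
  field_simp

/-- The Cauchy–Schlömilch evaluation of a Gaussian in `b x - a / x`. -/
theorem integral_exp_neg_sq_sub_div {a b : ℝ} (ha : 0 < a) (hb : 0 < b) :
    ∫ x in Ioi (0 : ℝ), exp (-(b * x - a / x) ^ 2) = √π / (2 * b) := by
  obtain ⟨hint, hval⟩ := integrableOn_and_integral_add_div_sq_mul_exp ha hb
  have hint₁ : IntegrableOn (fun x : ℝ => b * exp (-(b * x - a / x) ^ 2)) (Ioi 0) := by
    refine Integrable.mono' hint (by fun_prop) (ae_of_all _ fun x => ?_)
    rw [norm_of_nonneg (by positivity)]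
    gcongr
    exact le_add_of_nonneg_right (by positivity)
  have hint₂ : IntegrableOn (fun x : ℝ => a / x ^ 2 * exp (-(b * x - a / x) ^ 2)) (Ioi 0) :=
    (hint.sub hint₁).congr (ae_of_all _ fun x => by simp only [Pi.sub_apply]; ring)
  simp only [add_mul] at hval
  rw [integral_add hint₁ hint₂, integral_div_sq_mul_exp_eq ha hb, integral_const_mul] at hval
  rw [eq_div_iff (by positivity)]
  linarith

/-- The subordination kernel has total mass one when its drift is positive. -/
theorem integral_phiKer {a t : ℝ} (ha : 0 < a) (ht : 0 < t) :
    ∫ s in Ioi (0 : ℝ), phiKer a t s = 1 := by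
  rw [← integral_comp_rpow_Ioi (phiKer a t) (p := -2) (by norm_num)]
  have hcongr : ∀ x ∈ Ioi (0 : ℝ), (|(-2 : ℝ)| * x ^ ((-2 : ℝ) - 1)) • phiKer a t (x ^ (-2 : ℝ)) =
      t / √π * exp (-(t / 2 * x - a / x) ^ 2) := by
    intro x hx
    have hx' : 0 < x := hx
    have hsqrt : √(x ^ (-2 : ℝ)) = x⁻¹ := by
      rw [sqrt_eq_rpow, ← rpow_mul hx'.le, ← rpow_neg_one]
      norm_num
    have hpow : x ^ ((-2 : ℝ) - 1) * (x ^ (-2 : ℝ)) ^ (-(3 / 2) : ℝ) = 1 := by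
      rw [← rpow_mul hx'.le, ← rpow_add hx']
      norm_num
    have harg : t / (2 * x⁻¹) - a * x⁻¹ = t / 2 * x - a / x := by
      field_simp
    rw [phiKer, hsqrt, harg, smul_eq_mul, abs_neg, abs_two]
    linear_combination (t / √π * exp (-(t / 2 * x - a / x) ^ 2)) * hpow
  rw [setIntegral_congr_fun measurableSet_Ioi hcongr, integral_const_mul,
    integral_exp_neg_sq_sub_div ha (half_pos ht)]
  have hpi : √π ≠ 0 := by positivity
  field_simp

/-- Exponential damping shifts the drift of the subordination kernel. -/
theorem exp_mul_phiKer (lam t m : ℝ) {s : ℝ} (hs : 0 < s) :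
    exp (-(m * (m + 2 * lam) * s)) * phiKer lam t s =
      exp (-(m * t)) * phiKer (m + lam) t s := by
  have hsqrt : 0 < √s := sqrt_pos.2 hs
  have hexp : exp (-(m * (m + 2 * lam) * s)) * exp (-(t / (2 * √s) - lam * √s) ^ 2) =
      exp (-(m * t)) * exp (-(t / (2 * √s) - (m + lam) * √s) ^ 2) := by
    rw [← exp_add, ← exp_add]
    congr 1
    have hcross : t / (2 * √s) * √s = t / 2 := by field_simp
    linear_combination (-2 * m) * hcross + (m * (m + 2 * lam)) * sq_sqrt hs.le
  unfold phiKer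
  linear_combination (t / (2 * √π) * s ^ (-(3 / 2) : ℝ)) * hexp

/-- Subordination identity: `e^{-nt} = ∫₀^∞ e^{-n(n+2λ)s} φ_t(s) ds`. -/
theorem stmt9 (lam : ℝ) (hlam : 0 ≤ lam) (t : ℝ) (ht : 0 < t)
    (n : ℕ) (hn : 0 < (n : ℝ) + lam) :
    Real.exp (-((n : ℝ) * t)) =
      ∫ s in Set.Ioi (0 : ℝ),
        Real.exp (-((n : ℝ) * ((n : ℝ) + 2 * lam) * s)) * phiKer lam t s := by
  rw [setIntegral_congr_fun measurableSet_Ioi fun s hs => exp_mul_phiKer lam t n hs,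
    integral_const_mul, integral_phiKer hn ht, mul_one]
end
end

section
/- Let λ > 0 and for t > 0 let φ_t(s) = (t / (2√π)) · s^{−3/2} · exp( −( t/(2√s) − λ√s )^2 ) for s > 0. There exists a constant c > 0, depending only on λ, such that for every 0 < t ≤ 1, ∫_0^∞ s · |∂φ_t(s)/∂s| ds ≤ c. -/
open MeasureTheory Real Set

noncomputable section

/-- The kernel with its exponent expanded. -/
lemma phiKer_eq (lam t : ℝ) {s : ℝ} (hs : 0 < s) :
    phiKer lam t s = t / (2 * √π) * s ^ (-(3/2) : ℝ) *
      exp (lam * t - t ^ 2 / (4 * s) - lam ^ 2 * s) := by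
  unfold phiKer
  congr 2
  obtain ⟨r, hr, rfl⟩ : ∃ r : ℝ, 0 < r ∧ s = r ^ 2 :=
    ⟨√s, Real.sqrt_pos.2 hs, (Real.sq_sqrt hs.le).symm⟩
  rw [Real.sqrt_sq hr.le]
  field_simp
  ring

lemma hasDerivAt_phiKer (lam t : ℝ) {s : ℝ} (hs : 0 < s) :
    HasDerivAt (phiKer lam t)
      (phiKer lam t s * (-(3 / 2) / s + t ^ 2 / (4 * s ^ 2) - lam ^ 2)) s := by
  have hs0 : s ≠ 0 := hs.ne'
  have hpow := (Real.hasDerivAt_rpow_const (p := (-(3/2) : ℝ)) (Or.inl hs0)).const_mul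
    (t / (2 * √π))
  have hquot : HasDerivAt (fun u : ℝ => t ^ 2 / (4 * u)) (-(t ^ 2 / (4 * s ^ 2))) s := by
    refine ((hasDerivAt_const s (t ^ 2)).fun_div ((hasDerivAt_id s).const_mul 4)
      (by simpa using hs0)).congr_deriv ?_
    simp only [id]
    field_simp
    norm_num
  have hexp := ((hquot.const_sub (lam * t)).sub ((hasDerivAt_id s).const_mul (lam ^ 2))).exp
  refine ((hpow.mul hexp).congr_of_eventuallyEq ?_).congr_deriv ?_
  · filter_upwards [lt_mem_nhds hs] with u hu using phiKer_eq lam t hu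
  · rw [phiKer_eq lam t hs, Real.rpow_sub_one hs0]
    simp only [id, Pi.sub_apply]
    ring

lemma add_mul_exp_neg_le {x y : ℝ} (hx : 0 ≤ x) (hy : 0 ≤ y) :
    (3 / 2 + x + y) * exp (-x - y) ≤ 4 / (1 + x) := by
  have hxe := Real.quadratic_le_exp_of_nonneg hx
  have hye := Real.add_one_le_exp y
  rw [show -x - y = -(x + y) by ring, Real.exp_neg, Real.exp_add, ← div_eq_mul_inv,
    div_le_div_iff₀ (by positivity) (by positivity)]
  calc (3 / 2 + x + y) * (1 + x) ≤ (4 * (1 + x + x ^ 2 / 2)) * (y + 1) := by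
        nlinarith [mul_nonneg hx hy, mul_nonneg (sq_nonneg x) hy]
    _ ≤ (4 * exp x) * exp y := by gcongr
    _ = 4 * (exp x * exp y) := by ring

lemma mul_abs_deriv_phiKer_le {lam t s : ℝ} (hlam : 0 < lam) (ht : 0 < t) (ht1 : t ≤ 1)
    (hs : 0 < s) :
    s * |deriv (phiKer lam t) s| ≤ 8 * exp lam * (t / (√s * (t ^ 2 + 4 * s))) := by
  have hphi : 0 ≤ phiKer lam t s := by unfold phiKer; positivity
  have hpi : 1 ≤ √π := Real.one_le_sqrt.2 (by linarith [Real.pi_gt_three])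
  have hexp : exp (lam * t) ≤ exp lam := Real.exp_le_exp.2 (by nlinarith)
  have hsqrt : s ^ (-(3/2) : ℝ) = 1 / (s * √s) := by
    rw [Real.rpow_neg hs.le, show (3 / 2 : ℝ) = 1 + 1 / 2 by norm_num, Real.rpow_add hs,
      Real.rpow_one, ← Real.sqrt_eq_rpow, one_div]
  have hfactor : s * |-(3 / 2) / s + t ^ 2 / (4 * s ^ 2) - lam ^ 2| ≤
      3 / 2 + t ^ 2 / (4 * s) + lam ^ 2 * s := by
    rw [← abs_of_pos hs, ← abs_mul, abs_of_pos hs,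
      show s * (-(3 / 2) / s + t ^ 2 / (4 * s ^ 2) - lam ^ 2) =
        -(3 / 2) + t ^ 2 / (4 * s) - lam ^ 2 * s by field_simp]
    have h1 : 0 ≤ t ^ 2 / (4 * s) := by positivity
    have h2 : 0 ≤ lam ^ 2 * s := by positivity
    exact abs_le.2 ⟨by linarith, by linarith⟩
  rw [(hasDerivAt_phiKer lam t hs).deriv, abs_mul, abs_of_nonneg hphi]
  calc s * (phiKer lam t s * |-(3 / 2) / s + t ^ 2 / (4 * s ^ 2) - lam ^ 2|)
      = phiKer lam t s * (s * |-(3 / 2) / s + t ^ 2 / (4 * s ^ 2) - lam ^ 2|) := by ring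
    _ ≤ phiKer lam t s * (3 / 2 + t ^ 2 / (4 * s) + lam ^ 2 * s) := by gcongr
    _ = t / (2 * √π) * (1 / (s * √s)) * exp (lam * t) *
        ((3 / 2 + t ^ 2 / (4 * s) + lam ^ 2 * s) *
          exp (-(t ^ 2 / (4 * s)) - lam ^ 2 * s)) := by
        rw [phiKer_eq lam t hs, hsqrt,
          show lam * t - t ^ 2 / (4 * s) - lam ^ 2 * s =
            lam * t + (-(t ^ 2 / (4 * s)) - lam ^ 2 * s) by ring, Real.exp_add]
        ring
    _ ≤ t / (2 * 1) * (1 / (s * √s)) * exp lam * (4 / (1 + t ^ 2 / (4 * s))) := by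
        gcongr
        exact add_mul_exp_neg_le (by positivity) (by positivity)
    _ = 8 * exp lam * (t / (√s * (t ^ 2 + 4 * s))) := by
        have := Real.sqrt_pos.2 hs
        field_simp
        ring

lemma hasDerivAt_arctan_sqrt {t s : ℝ} (ht : 0 < t) (hs : 0 < s) :
    HasDerivAt (fun u => arctan (2 * √u / t)) (t / (√s * (t ^ 2 + 4 * s))) s := by
  refine ((((Real.hasDerivAt_sqrt hs.ne').const_mul 2).div_const t).arctan).congr_deriv ?_
  have := Real.sqrt_pos.2 hs
  rw [div_pow, mul_pow, Real.sq_sqrt hs.le]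
  field_simp
  ring

lemma tendsto_arctan_sqrt {t : ℝ} (ht : 0 < t) :
    Filter.Tendsto (fun u => arctan (2 * √u / t)) Filter.atTop (nhds (π / 2)) :=
  (Real.tendsto_arctan_atTop.mono_right nhdsWithin_le_nhds).comp
    ((Real.tendsto_sqrt_atTop.const_mul_atTop two_pos).atTop_div_const ht)

/-- `∫₀^∞ s |φ_t'(s)| ds ≤ c` uniformly in `0 < t ≤ 1`. -/
theorem stmt10 (lam : ℝ) (hlam : 0 < lam) :
    ∃ c : ℝ, 0 < c ∧ ∀ t : ℝ, 0 < t → t ≤ 1 →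
      (∫ s in Set.Ioi (0 : ℝ), s * |deriv (phiKer lam t) s|) ≤ c := by
  refine ⟨8 * exp lam * (π / 2), by positivity, fun t ht ht1 => ?_⟩
  have hcont : ContinuousWithinAt (fun u => arctan (2 * √u / t)) (Ici 0) 0 :=
    Continuous.continuousWithinAt (by fun_prop)
  have hderiv : ∀ s ∈ Ioi (0 : ℝ), HasDerivAt (fun u => arctan (2 * √u / t))
      (t / (√s * (t ^ 2 + 4 * s))) s := fun s hs => hasDerivAt_arctan_sqrt ht hs
  have hnonneg : ∀ s ∈ Ioi (0 : ℝ), 0 ≤ t / (√s * (t ^ 2 + 4 * s)) := fun s hs => by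
    have : 0 < s := hs
    positivity
  have hint := integrableOn_Ioi_deriv_of_nonneg hcont hderiv hnonneg (tendsto_arctan_sqrt ht)
  calc ∫ s in Ioi (0 : ℝ), s * |deriv (phiKer lam t) s|
      ≤ ∫ s in Ioi (0 : ℝ), 8 * exp lam * (t / (√s * (t ^ 2 + 4 * s))) := by
        refine integral_mono_of_nonneg ?_ (hint.const_mul _) ?_
        · filter_upwards [ae_restrict_mem measurableSet_Ioi] with s hs
          exact mul_nonneg (le_of_lt hs) (abs_nonneg _)
        · filter_upwards [ae_restrict_mem measurableSet_Ioi] with s hs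
          exact mul_abs_deriv_phiKer_le hlam ht ht1 hs
    _ = 8 * exp lam * (π / 2) := by
        rw [integral_const_mul, integral_Ioi_of_hasDerivAt_of_nonneg hcont hderiv hnonneg
          (tendsto_arctan_sqrt ht)]
        simp
end
end
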